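/- Suppose (u_t)_{t∈ℤ} is a strong white noise in H and set σ² = E‖u₀‖² and μ₄ = E‖u₀‖⁴. For n ≥ 1, a function k : ℝ → [−1,1] and p_n > 0, define C̃_n = n^{-1}·Σ_{j=1}^{n−1} k(j/p_n)²·Σ_{t=j+1}^n ‖u_t‖²·‖u_{t−j}‖². Then Var(C̃_n) ≤ 3·μ₄²·n^{-1}·( Σ_{j=1}^{n−1} k(j/p_n)² )². -/

import Mathlib

/-!
Put `X t = ‖u t‖ ^ 2`. For a fixed lag `h ≠ 0` the product `X t * X (t - h)` is independent of
`X r * X (r - h)` unless `r` is one of `t`, `t + h`, `t - h`, and the variance of each such product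
is at most `μ₄ ^ 2`. Thus only three covariances per time point survive, and each inner sum has
variance at most `3 n μ₄ ^ 2`. By `|cov[Y, Z]| ≤ (Var[Y] + Var[Z]) / 2` the same bound holds for the
covariance of two inner sums, so the weighted sum over the lags multiplies it by at most the square
of the total absolute weight.
-/

open MeasureTheory ProbabilityTheory Filter Finset Topology
open scoped NNReal RealInnerProductSpace

noncomputable section

section Covariance

variable {Ω ι : Type*} [MeasurableSpace Ω] {P : Measure Ω} [IsFiniteMeasure P]

lemma abs_covariance_le_half_variance_add {X Y : Ω → ℝ} (hX : MemLp X 2 P) (hY : MemLp Y 2 P) :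
    |cov[X, Y; P]| ≤ (Var[X; P] + Var[Y; P]) / 2 := by
  have hadd : 0 ≤ Var[X; P] + 2 * cov[X, Y; P] + Var[Y; P] :=
    variance_add hX hY ▸ variance_nonneg _ _
  have hsub : 0 ≤ Var[X; P] - 2 * cov[X, Y; P] + Var[Y; P] :=
    variance_sub hX hY ▸ variance_nonneg _ _
  rw [abs_le]
  constructor <;> linarith

lemma abs_covariance_le_of_variance_le {X Y : Ω → ℝ} {v : ℝ} (hX : MemLp X 2 P)
    (hY : MemLp Y 2 P) (hXv : Var[X; P] ≤ v) (hYv : Var[Y; P] ≤ v) : |cov[X, Y; P]| ≤ v :=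
  (abs_covariance_le_half_variance_add hX hY).trans (by linarith)

variable {X : ι → Ω → ℝ} {s : Finset ι} {v : ℝ}

lemma variance_sum_const_mul_le (hX : ∀ i ∈ s, MemLp (X i) 2 P) (hv : ∀ i ∈ s, Var[X i; P] ≤ v)
    (w : ι → ℝ) : Var[fun ω ↦ ∑ i ∈ s, w i * X i ω; P] ≤ (∑ i ∈ s, |w i|) ^ 2 * v :=
  calc Var[fun ω ↦ ∑ i ∈ s, w i * X i ω; P]
      = ∑ i ∈ s, ∑ j ∈ s, w j * (w i * cov[X i, X j; P]) := by
        rw [variance_fun_sum' fun i hi ↦ (hX i hi).const_mul (w i)]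
        simp only [covariance_const_mul_left, covariance_const_mul_right]
    _ ≤ ∑ i ∈ s, ∑ j ∈ s, |w j| * |w i| * v := by
        refine sum_le_sum fun i hi ↦ sum_le_sum fun j hj ↦ ?_
        rw [← mul_assoc, ← abs_mul]
        have hcov := abs_covariance_le_of_variance_le (hX i hi) (hX j hj) (hv i hi) (hv j hj)
        calc w j * w i * cov[X i, X j; P] ≤ |w j * w i| * |cov[X i, X j; P]| :=
              (le_abs_self _).trans (abs_mul _ _).le
          _ ≤ |w j * w i| * v := by gcongr
    _ = (∑ i ∈ s, |w i|) ^ 2 * v := by simp only [sq, sum_mul, mul_sum]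

lemma variance_sum_le_of_card_covariance_ne_zero_le {d : ℕ} (hX : ∀ i ∈ s, MemLp (X i) 2 P)
    (hv : ∀ i ∈ s, Var[X i; P] ≤ v) (hd : ∀ i ∈ s, #{j ∈ s | cov[X i, X j; P] ≠ 0} ≤ d) :
    Var[fun ω ↦ ∑ i ∈ s, X i ω; P] ≤ #s * (d * v) := by
  rw [variance_fun_sum' hX, ← nsmul_eq_mul]
  refine sum_le_card_nsmul _ _ _ fun i hi ↦ ?_
  have hv0 : 0 ≤ v := (variance_nonneg _ _).trans (hv i hi)
  calc ∑ j ∈ s, cov[X i, X j; P]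
      = ∑ j ∈ s with cov[X i, X j; P] ≠ 0, cov[X i, X j; P] := (sum_filter_ne_zero s).symm
    _ ≤ #{j ∈ s | cov[X i, X j; P] ≠ 0} • v := by
        refine sum_le_card_nsmul _ _ _ fun j hj ↦ (le_abs_self _).trans ?_
        have hj : j ∈ s := (mem_filter.1 hj).1
        exact abs_covariance_le_of_variance_le (hX i hi) (hX j hj) (hv i hi) (hv j hj)
    _ ≤ d * v := by
        rw [nsmul_eq_mul]
        gcongr
        exact hd i hi

end Covariance

section IndependentProduct

variable {Ω : Type*} [MeasurableSpace Ω] {P : Measure Ω} {X Y : Ω → ℝ}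

lemma indepFun_sq (hXY : X ⟂ᵢ[P] Y) : (X ^ 2) ⟂ᵢ[P] (Y ^ 2) :=
  have hpow : Measurable fun x : ℝ ↦ x ^ 2 := measurable_id.pow_const 2
  hXY.comp hpow hpow

lemma memLp_two_mul_of_indepFun (hXY : X ⟂ᵢ[P] Y) (hX : MemLp X 2 P) (hY : MemLp Y 2 P) :
    MemLp (X * Y) 2 P := by
  rw [memLp_two_iff_integrable_sq (hX.1.mul hY.1)]
  simpa only [← mul_pow] using! (indepFun_sq hXY).integrable_mul hX.integrable_sq hY.integrable_sq

lemma variance_mul_le_of_indepFun [IsProbabilityMeasure P] (hXY : X ⟂ᵢ[P] Y)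
    (hX : AEStronglyMeasurable X P) (hY : AEStronglyMeasurable Y P) :
    Var[X * Y; P] ≤ P[X ^ 2] * P[Y ^ 2] := by
  rw [← (indepFun_sq hXY).integral_mul_eq_mul_integral (hX.pow 2) (hY.pow 2), ← mul_pow]
  exact variance_le_expectation_sq (hX.mul hY)

end IndependentProduct

section LaggedProduct

variable {Ω G : Type*} [MeasurableSpace Ω] {P : Measure Ω} [AddGroup G] {X : G → Ω → ℝ} {h : G}

lemma memLp_two_mul_lag (hX : ∀ t, MemLp (X t) 2 P) (hindep : iIndepFun X P) (hh : h ≠ 0)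
    (t : G) : MemLp (X t * X (t - h)) 2 P :=
  memLp_two_mul_of_indepFun (hindep.indepFun (Ne.symm (mt sub_eq_self.1 hh))) (hX t) (hX _)

lemma covariance_mul_lag_eq_zero (hX : ∀ t, MemLp (X t) 2 P) (hindep : iIndepFun X P)
    (hh : h ≠ 0) {t r : G} (hr : r ≠ t) (hr_add : r ≠ t + h) (hr_sub : r ≠ t - h) :
    cov[X t * X (t - h), X r * X (r - h); P] = 0 := by
  have hprod : (X t * X (t - h)) ⟂ᵢ[P] (X r * X (r - h)) :=
    hindep.indepFun_mul_mul₀ (fun t ↦ (hX t).1.aemeasurable) t (t - h) r (r - h) hr.symm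
      (fun htr ↦ hr_add (eq_sub_iff_add_eq.1 htr).symm) hr_sub.symm
      (fun htr ↦ hr (sub_left_injective htr).symm)
  exact hprod.covariance_eq_zero (memLp_two_mul_lag hX hindep hh t)
    (memLp_two_mul_lag hX hindep hh r)

variable [IsProbabilityMeasure P]

lemma variance_mul_lag_le {s : ℝ} (hX : ∀ t, MemLp (X t) 2 P) (hindep : iIndepFun X P)
    (hs : ∀ t, P[X t ^ 2] ≤ s) (hh : h ≠ 0) (t : G) : Var[X t * X (t - h); P] ≤ s ^ 2 := by
  have hnonneg (r : G) : 0 ≤ P[X r ^ 2] := integral_nonneg fun ω ↦ sq_nonneg (X r ω)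
  calc Var[X t * X (t - h); P] ≤ P[X t ^ 2] * P[X (t - h) ^ 2] :=
        variance_mul_le_of_indepFun (hindep.indepFun (Ne.symm (mt sub_eq_self.1 hh)))
          (hX t).1 (hX (t - h)).1
    _ ≤ s * s :=
        mul_le_mul (hs t) (hs (t - h)) (hnonneg (t - h)) ((hnonneg t).trans (hs t))
    _ = s ^ 2 := (sq s).symm

lemma variance_sum_mul_lag_le {s : ℝ} (hX : ∀ t, MemLp (X t) 2 P) (hindep : iIndepFun X P)
    (hs : ∀ t, P[X t ^ 2] ≤ s) (hh : h ≠ 0) (S : Finset G) :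
    Var[fun ω ↦ ∑ t ∈ S, X t ω * X (t - h) ω; P] ≤ #S * (3 * s ^ 2) := by
  classical
  refine variance_sum_le_of_card_covariance_ne_zero_le
    (fun t _ ↦ memLp_two_mul_lag hX hindep hh t)
    (fun t _ ↦ variance_mul_lag_le hX hindep hs hh t) fun t _ ↦ ?_
  have hsupport : {r ∈ S | cov[X t * X (t - h), X r * X (r - h); P] ≠ 0} ⊆ {t, t + h, t - h} := by
    intro r hr
    by_contra hmem
    simp only [mem_insert, mem_singleton, not_or] at hmem
    exact (mem_filter.1 hr).2 (covariance_mul_lag_eq_zero hX hindep hh hmem.1 hmem.2.1 hmem.2.2)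
  exact (card_le_card hsupport).trans card_le_three

lemma variance_sum_const_mul_sum_mul_lag_le {ι : Type*} {s : ℝ} {N : ℕ}
    (hX : ∀ t, MemLp (X t) 2 P) (hindep : iIndepFun X P) (hs : ∀ t, P[X t ^ 2] ≤ s)
    {J : Finset ι} {lag : ι → G} (hlag : ∀ j ∈ J, lag j ≠ 0) {S : ι → Finset G}
    (hS : ∀ j ∈ J, #(S j) ≤ N) (w : ι → ℝ) :
    Var[fun ω ↦ ∑ j ∈ J, w j * ∑ t ∈ S j, X t ω * X (t - lag j) ω; P]
      ≤ (∑ j ∈ J, |w j|) ^ 2 * (N * (3 * s ^ 2)) := by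
  refine variance_sum_const_mul_le (X := fun j ω ↦ ∑ t ∈ S j, X t ω * X (t - lag j) ω)
    (fun j hj ↦ memLp_finsetSum _ fun t _ ↦ memLp_two_mul_lag hX hindep (hlag j hj) t)
    (fun j hj ↦ (variance_sum_mul_lag_le hX hindep hs (hlag j hj) _).trans ?_) w
  gcongr
  exact hS j hj

end LaggedProduct

lemma memLp_two_norm_sq {Ω E : Type*} [MeasurableSpace Ω] {P : Measure Ω} [NormedAddCommGroup E]
    [MeasurableSpace E] [OpensMeasurableSpace E] {f : Ω → E} (hf : AEMeasurable f P)
    (hf4 : Integrable (fun ω ↦ ‖f ω‖ ^ 4) P) : MemLp (fun ω ↦ ‖f ω‖ ^ 2) 2 P := by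
  rw [memLp_two_iff_integrable_sq (hf.norm.pow_const 2).aestronglyMeasurable]
  simpa only [← pow_mul] using hf4

theorem variance_tildeC_le_general
    {E : Type*} [NormedAddCommGroup E] [MeasurableSpace E] [OpensMeasurableSpace E]
    {Ω : Type*} [MeasurableSpace Ω] {P : Measure Ω} [IsProbabilityMeasure P]
    {u : ℤ → Ω → E} (hmeas : ∀ t, AEMeasurable (u t) P) (hindep : iIndepFun u P)
    (hmom4 : ∀ t, Integrable (fun ω ↦ ‖u t ω‖ ^ 4) P)
    {μ4 : ℝ} (hμ4 : ∀ t, ∫ ω, ‖u t ω‖ ^ 4 ∂P ≤ μ4) (w : ℕ → ℝ) {n : ℕ} (hn : 1 ≤ n) :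
    Var[fun ω ↦ (n : ℝ)⁻¹ * ∑ j ∈ Finset.Icc 1 (n - 1), w j *
        ∑ t ∈ Finset.Icc ((j : ℤ) + 1) (n : ℤ), ‖u t ω‖ ^ 2 * ‖u (t - j) ω‖ ^ 2; P]
      ≤ 3 * μ4 ^ 2 * (n : ℝ)⁻¹ * (∑ j ∈ Finset.Icc 1 (n - 1), |w j|) ^ 2 := by
  have hindep_sq : iIndepFun (fun t ω ↦ ‖u t ω‖ ^ 2) P :=
    hindep.comp (fun _ x ↦ ‖x‖ ^ 2) fun _ ↦ measurable_norm.pow_const 2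
  have hmom_sq (t : ℤ) : P[(fun ω ↦ ‖u t ω‖ ^ 2) ^ 2] ≤ μ4 := by
    simpa only [Pi.pow_apply, ← pow_mul] using hμ4 t
  have hsum := variance_sum_const_mul_sum_mul_lag_le (N := n) (J := Finset.Icc 1 (n - 1))
    (lag := fun j ↦ (j : ℤ)) (S := fun j ↦ Finset.Icc ((j : ℤ) + 1) (n : ℤ))
    (fun t ↦ memLp_two_norm_sq (hmeas t) (hmom4 t)) hindep_sq hmom_sq
    (fun j hj ↦ by have := (Finset.mem_Icc.1 hj).1; omega)
    (fun j _ ↦ by rw [Int.card_Icc]; omega) w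
  rw [variance_const_mul]
  refine (mul_le_mul_of_nonneg_left hsum (sq_nonneg _)).trans_eq ?_
  field_simp

/-- Equation (A.2): for a strong white noise with `μ₄ = E‖u₀‖⁴`, the variance of
`C̃_n = n⁻¹ Σ_{j=1}^{n-1} k(j/p_n)² Σ_{t=j+1}^n ‖u_t‖²‖u_{t-j}‖²` satisfies
`Var(C̃_n) ≤ 3 μ₄² n⁻¹ (Σ_{j=1}^{n-1} k(j/p_n)²)²`. -/
theorem variance_tildeC_le
    {H : Type*} [NormedAddCommGroup H] [InnerProductSpace ℝ H]
    [CompleteSpace H] [SecondCountableTopology H] [MeasurableSpace H] [BorelSpace H]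
    {Ω : Type*} [MeasurableSpace Ω] (P : Measure Ω) [IsProbabilityMeasure P]
    (u : ℤ → Ω → H)
    (hmeas : ∀ t, Measurable (u t))
    (hindep : iIndepFun u P)
    (hident : ∀ t, IdentDistrib (u t) (u 0) P P)
    (hint : Integrable (u 0) P)
    (hmean : ∫ ω, u 0 ω ∂P = 0)
    (hmom4 : Integrable (fun ω => ‖u 0 ω‖ ^ 4) P)
    (μ4 : ℝ) (hμ4 : μ4 = ∫ ω, ‖u 0 ω‖ ^ 4 ∂P)
    (k : ℝ → ℝ) (hk : ∀ x, k x ∈ Set.Icc (-1 : ℝ) 1) (p : ℝ) (hp : 0 < p)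
    (n : ℕ) (hn : 1 ≤ n) :
    variance (fun ω => (n : ℝ)⁻¹ * ∑ j ∈ Finset.Icc 1 (n - 1), k ((j : ℝ) / p) ^ 2 *
        ∑ t ∈ Finset.Icc ((j : ℤ) + 1) (n : ℤ), ‖u t ω‖ ^ 2 * ‖u (t - j) ω‖ ^ 2) P
      ≤ 3 * μ4 ^ 2 * (n : ℝ)⁻¹ * (∑ j ∈ Finset.Icc 1 (n - 1), k ((j : ℝ) / p) ^ 2) ^ 2 := by
  have hident4 (t : ℤ) := (hident t).comp (measurable_norm.pow_const 4)
  have hbound := variance_tildeC_le_general (fun t ↦ (hmeas t).aemeasurable) hindep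
    (fun t ↦ (hident4 t).integrable_iff.2 hmom4) (fun t ↦ (hident4 t).integral_eq.trans_le hμ4.ge)
    (fun j ↦ k ((j : ℝ) / p) ^ 2) hn
  simpa only [abs_pow, sq_abs] using hbound

end
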